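/- Let V be the three-element poset {a,b,c} with a < b, a < c, and b, c incomparable, and let V(n) := V × [n] be the product of V with the n-element chain, equipped with the product order. For all integers n ≥ 1 and m ≥ 0, the number of weakly order-preserving maps π : V(n) → {0, 1, …, m} equals (∏_{i=1}^{n}(m+1+i) · ∏_{i=1}^{2n}(2m+i+1)) / ((n+1)!·(2n+1)!); equivalently, this number multiplied by (n+1)!·(2n+1)! equals ∏_{i=1}^{n}(m+1+i) · ∏_{i=1}^{2n}(2m+i+1). -/

import Mathlib

/-- The three letters of a Kreweras word. -/
inductive KLetter : Type
  | A | B | C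
deriving DecidableEq, Repr

open KLetter

/-- `w` is a Kreweras word of length `3 * n`: it has `n` `A`'s, `n` `B`'s, `n` `C`'s,
and every prefix has at least as many `A`'s as `B`'s and at least as many `A`'s as `C`'s. -/
def IsKrewerasWord (n : ℕ) (w : List KLetter) : Prop :=
  w.length = 3 * n ∧ w.count A = n ∧ w.count B = n ∧ w.count C = n ∧
  ∀ k : ℕ, (w.take k).count B ≤ (w.take k).count A ∧
           (w.take k).count C ≤ (w.take k).count A

/-- `kiota w` is the smallest index `ι ≥ 1` (1-indexed) such that the prefix of
length `ι` of `w` has equally many `A`'s as `B`'s, or equally many `A`'s as `C`'s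
(and `0` if no such index exists). -/
def kiota (w : List KLetter) : ℕ :=
  (((List.range (w.length + 1)).filter fun k =>
      decide (1 ≤ k) &&
      (((w.take k).count A == (w.take k).count B) ||
       ((w.take k).count A == (w.take k).count C))).headD 0)

/-- Promotion of a Kreweras word:
`pro w = (w₂, …, w_{ι-1}, A, w_{ι+1}, …, w_{3n}, w_ι)` where `ι = kiota w`. -/
def pro (w : List KLetter) : List KLetter :=
  ((w.drop 1).set (kiota w - 2) A) ++ [w.getD (kiota w - 1) A]

/-- The trip permutation `σ_w` of a Kreweras word of length `3 * n`, as a function on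
1-indexed positions: `σ_w i` is the unique element of `{1, …, 3n}` congruent to
`kiota (pro^[i-1] w) + i - 1` modulo `3 * n`. -/
def ksigma (n : ℕ) (w : List KLetter) (i : ℕ) : ℕ :=
  (kiota (pro^[i - 1] w) + i - 2) % (3 * n) + 1

/-- `keps w i` is the letter of `pro^[i-1] w` in (1-indexed) position `kiota (pro^[i-1] w)`. -/
def keps (w : List KLetter) (i : ℕ) : KLetter :=
  (pro^[i - 1] w).getD (kiota (pro^[i - 1] w) - 1) A

/-- The negation swapping `B` and `C` (and fixing `A`). -/
def negL : KLetter → KLetter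
  | A => A
  | B => C
  | C => B

open Classical in
/-- The involution `τ_i` on Kreweras words of length `3 * n`: swap the letters in
(1-indexed) positions `i` and `i + 1` if the result is again a Kreweras word,
and otherwise do nothing. -/
noncomputable def tau (n i : ℕ) (w : List KLetter) : List KLetter :=
  let w' := (w.set (i - 1) (w.getD i A)).set i (w.getD (i - 1) A)
  if IsKrewerasWord n w' then w' else w

/-- `tauDown n j = τ_j ∘ τ_{j-1} ∘ ⋯ ∘ τ_1`. -/
noncomputable def tauDown (n : ℕ) : ℕ → List KLetter → List KLetter
  | 0, w => w
  | j + 1, w => tau n (j + 1) (tauDown n j w)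

/-- `evacAux n j = (tauDown n 1) ∘ (tauDown n 2) ∘ ⋯ ∘ (tauDown n j)`. -/
noncomputable def evacAux (n : ℕ) : ℕ → List KLetter → List KLetter
  | 0, w => w
  | j + 1, w => evacAux n j (tauDown n (j + 1) w)

/-- Evacuation on Kreweras words of length `3 * n`:
`evac = (τ_1) ∘ (τ_2 ∘ τ_1) ∘ ⋯ ∘ (τ_{3n-1} ∘ ⋯ ∘ τ_2 ∘ τ_1)`. -/
noncomputable def evac (n : ℕ) (w : List KLetter) : List KLetter :=
  evacAux n (3 * n - 1) w

/-- `tauAsc n k c = τ_{k+c-1} ∘ ⋯ ∘ τ_{k+1} ∘ τ_k`. -/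
noncomputable def tauAsc (n k : ℕ) : ℕ → List KLetter → List KLetter
  | 0, w => w
  | j + 1, w => tau n (k + j) (tauAsc n k j w)

/-- `evacStarAux n j = (tauAsc n 1 (3n-1)) ∘ (tauAsc n 2 (3n-2)) ∘ ⋯ ∘ (tauAsc n j (3n-j))`. -/
noncomputable def evacStarAux (n : ℕ) : ℕ → List KLetter → List KLetter
  | 0, w => w
  | j + 1, w => evacStarAux n j (tauAsc n (j + 1) (3 * n - (j + 1)) w)

/-- Dual evacuation on Kreweras words of length `3 * n`:
`evac* = (τ_{3n-1} ∘ ⋯ ∘ τ_1) ∘ (τ_{3n-1} ∘ ⋯ ∘ τ_2) ∘ ⋯ ∘ (τ_{3n-1})`. -/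
noncomputable def evacStar (n : ℕ) (w : List KLetter) : List KLetter :=
  evacStarAux n (3 * n - 1) w

/-- The three-element "V"-shaped poset: `a < b`, `a < c`, with `b`, `c` incomparable. -/
inductive VP : Type
  | a | b | c
deriving DecidableEq

instance : PartialOrder VP where
  le x y := x = y ∨ x = VP.a
  le_refl x := Or.inl rfl
  le_trans x y z hxy hyz := by
    rcases hxy with rfl | rfl
    · exact hyz
    · exact Or.inr rfl
  le_antisymm x y hxy hyx := by
    rcases hxy with rfl | rfl
    · rfl
    · rcases hyx with rfl | rfl <;> rfl

/-- The labeling of elements of `V(n) = VP × Fin n` by letters. -/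
def vlabel {n : ℕ} (p : VP × Fin n) : KLetter :=
  match p.1 with
  | VP.a => A
  | VP.b => B
  | VP.c => C

/-- `L` is a linear extension of `V(n) = VP × Fin n` (with the product order):
a list of all elements of `V(n)`, each appearing once, such that `L_i ≤ L_j`
implies `i ≤ j`. -/
def IsLinearExtension (n : ℕ) (L : List (VP × Fin n)) : Prop :=
  L.Nodup ∧ (∀ p : VP × Fin n, p ∈ L) ∧
  ∀ i j : Fin L.length, L.get i ≤ L.get j → (i : ℕ) ≤ (j : ℕ)

/-- A connected Kreweras word: a Kreweras word of length `3 * n` having no proper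
nonempty consecutive substring which is itself a Kreweras word. -/
def ConnectedKrewerasWord (n : ℕ) (w : List KLetter) : Prop :=
  IsKrewerasWord n w ∧
  ∀ (u : List KLetter) (m : ℕ), u <:+: w → u ≠ [] → u ≠ w → ¬ IsKrewerasWord m u

/-!
A weakly increasing sequence `f` of length `n` in `{0, …, m}` is encoded by the set
`{f 0, f 1 + 1, …}`, an `n`-element subset of `{0, …, n + m - 1}`. The pointwise order becomes a
ballot condition on initial segments, so one has to count triples `(a, b, c)` of `n`-element
subsets of `{0, …, N - 1}`, `N = n + m`, such that `a` dominates `b` and `c`.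

These triples are walks in the quarter plane with coordinates `#a - #b` and `#a - #c`. With `u`
marking `#a`, their generating series satisfies a functional equation with kernel
`y z - t (1 + u y z) (1 + y) (1 + z)`. Along the curve where the kernel vanishes, `y z` decouples
into a function of `y` and a function of `z`. This yields two invariants, expressions in `(y, t)`
and `(z, t)` agreeing on the curve, and they must be linearly related over power series in `t`.
Restricting the relation to the diagonal `y = z`, where `t` is the square of
`σ = y / √((1 + u y²) (1 + y)²)`, gives the series of closed walks as a power series in `σ` up to
terms of the other parity, and Lagrange inversion turns this into a formula for the coefficients.
-/

open PowerSeries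

section PowerSeriesGeneralities

open scoped PowerSeries.WithPiTopology in
theorem exists_eval_ringHom {L : Type*} [CommRing L] {t : L⟦X⟧} (ht : constantCoeff t = 0) :
    ∃ ε : L⟦X⟧⟦X⟧ →+* L⟦X⟧, (∀ a, ε (C a) = a) ∧ ε X = t := by
  let _ : UniformSpace L := ⊥
  have hid : Continuous (RingHom.id L⟦X⟧) := continuous_id
  have hasEval_t : HasEval t := WithPiTopology.isTopologicallyNilpotent_of_constantCoeff_zero ht
  refine ⟨eval₂Hom hid hasEval_t, fun a ↦ ?_, ?_⟩
  · simp [coe_eval₂Hom, eval₂_C]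
  · simp [coe_eval₂Hom, eval₂_X]

theorem constantCoeff_apply_of_X_dvd {R S : Type*} [CommRing R] [CommRing S]
    {φ : R⟦X⟧ →+* S⟦X⟧} (hX : X ∣ φ X) (f : R⟦X⟧) :
    constantCoeff (φ f) = constantCoeff (φ (C (constantCoeff f))) := by
  conv_lhs => rw [eq_X_mul_shift_add_const f]
  rw [map_add, map_add, map_mul, map_mul, X_dvd_iff.mp hX, zero_mul, zero_add]

theorem ringHom_ext_of_X_dvd {R S : Type*} [CommRing R] [CommRing S]
    {φ ψ : R⟦X⟧ →+* S⟦X⟧} (hdvd : X ∣ φ X) (hC : ∀ r, φ (C r) = ψ (C r)) (hX : φ X = ψ X) :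
    φ = ψ := by
  have hpoly : φ.comp Polynomial.coeToPowerSeries.ringHom
      = ψ.comp Polynomial.coeToPowerSeries.ringHom :=
    Polynomial.ringHom_ext (by simpa using hC) (by simpa using hX)
  ext f n
  have htrunc := congr($hpoly (trunc (n + 1) f))
  simp only [RingHom.comp_apply, Polynomial.coeToPowerSeries.ringHom_apply] at htrunc
  have hdiff : X ^ (n + 1) ∣ φ f - ψ f := by
    rw [eq_X_pow_mul_shift_add_trunc (n + 1) f, map_add, map_add, htrunc, add_sub_add_right_eq_sub,
      map_mul, map_mul, map_pow, map_pow, ← hX, ← mul_sub]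
    exact (pow_dvd_pow_of_dvd hdvd _).mul_right _
  simpa [sub_eq_zero] using X_pow_dvd_iff.mp hdiff n n.lt_succ_self

theorem exists_sq_eq {R : Type*} [CommRing R] {f : R⟦X⟧} {a : R} (ha : IsUnit (2 * a))
    (hf : constantCoeff f = a ^ 2) : ∃ g : R⟦X⟧, constantCoeff g = a ∧ g ^ 2 = f := by
  obtain ⟨g, hg, hga⟩ := HenselianRing.is_henselian (I := Ideal.span {(X : R⟦X⟧)})
    (Polynomial.X ^ 2 - Polynomial.C f) (Polynomial.monic_X_pow_sub_C f two_ne_zero) (C a)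
    (by simp [Ideal.mem_span_singleton, X_dvd_iff, hf])
    (by simpa [one_add_one_eq_two, map_ofNat] using
      (ha.map (C : R →+* R⟦X⟧)).map (Ideal.Quotient.mk (Ideal.span {X})))
  rw [Polynomial.IsRoot, Polynomial.eval_sub, Polynomial.eval_X_pow, Polynomial.eval_C,
    sub_eq_zero] at hg
  rw [Ideal.mem_span_singleton, X_dvd_iff, map_sub, constantCoeff_C, sub_eq_zero] at hga
  exact ⟨g, hga, hg⟩

theorem subst_eq_mul_subst_shift_add_const {R : Type*} [CommRing R] {σ : R⟦X⟧}
    (hσ : constantCoeff σ = 0) (g : R⟦X⟧) :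
    subst σ g = σ * subst σ (mk fun i ↦ coeff (i + 1) g) + C (constantCoeff g) := by
  have hsubst : HasSubst σ := .of_constantCoeff_zero' hσ
  conv_lhs => rw [eq_X_mul_shift_add_const g, subst_add hsubst, subst_mul hsubst,
    subst_X hsubst, subst_C]
  rfl

theorem constantCoeff_subst_of_constantCoeff_eq_zero {R : Type*} [CommRing R] {σ : R⟦X⟧}
    (hσ : constantCoeff σ = 0) (g : R⟦X⟧) : constantCoeff (subst σ g) = constantCoeff g := by
  rw [subst_eq_mul_subst_shift_add_const hσ, map_add, map_mul, hσ, zero_mul, zero_add,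
    constantCoeff_C]

theorem subst_ofNat {R : Type*} [CommRing R] {σ : R⟦X⟧} (hσ : HasSubst σ) (n : ℕ)
    [n.AtLeastTwo] : subst σ (ofNat(n) : R⟦X⟧) = ofNat(n) := by
  rw [← coe_substAlgHom hσ, map_ofNat]

theorem subst_expand {R : Type*} [CommRing R] {σ : R⟦X⟧} (hσ : HasSubst σ) {p : ℕ} (hp : p ≠ 0)
    (f : R⟦X⟧) : subst σ (expand p hp f) = subst (σ ^ p) f := by
  rw [expand_apply, subst_comp_subst_apply (.X_pow hp) hσ, subst_pow hσ, subst_X hσ]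

section LagrangeInversion

variable {R : Type*} [CommRing R] {σ φ : R⟦X⟧}

theorem mul_derivative_add_mul_derivative (h : σ * φ = X) :
    σ * d⁄dX R φ + φ * d⁄dX R σ = 1 := by
  simpa [Derivation.leibniz] using congr(d⁄dX R $h)

theorem natCast_mul_pow_succ_mul_derivative (h : σ * φ = X) (m : ℕ) :
    (m : R⟦X⟧) * (φ ^ (m + 1) * d⁄dX R σ) = (m : R⟦X⟧) * φ ^ m - X * d⁄dX R (φ ^ m) := by
  have hderiv := mul_derivative_add_mul_derivative h
  cases m with
  | zero => simp
  | succ m =>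
    rw [Derivation.leibniz_pow, ← h]
    simp only [smul_eq_mul, nsmul_eq_mul, add_tsub_cancel_right]
    linear_combination (↑(m + 1) : R⟦X⟧) * φ ^ (m + 1) * hderiv

theorem natCast_mul_coeff_pow_succ_mul_derivative (h : σ * φ = X) (m i : ℕ) :
    (m : R) * coeff i (φ ^ (m + 1) * d⁄dX R σ) = (m - i) * coeff i (φ ^ m) := by
  have hcoeff := congr(coeff i $(natCast_mul_pow_succ_mul_derivative h m))
  rw [map_sub, ← map_natCast (C : R →+* R⟦X⟧), coeff_C_mul, coeff_C_mul] at hcoeff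
  rw [hcoeff, sub_mul, sub_right_inj]
  cases i with
  | zero => simp
  | succ i => rw [coeff_succ_X_mul, coeff_derivative]; push_cast; ring

variable [NoZeroDivisors R] [CharZero R]

theorem coeff_pow_succ_mul_derivative (hσ : constantCoeff σ = 0) (h : σ * φ = X) (m : ℕ) :
    coeff m (φ ^ (m + 1) * d⁄dX R σ) = if m = 0 then 1 else 0 := by
  split_ifs with hm
  · simpa [hσ, hm] using congr(constantCoeff $(mul_derivative_add_mul_derivative h))
  · simpa [hm] using natCast_mul_coeff_pow_succ_mul_derivative h m m

theorem coeff_subst_mul_pow_succ_mul_derivative (hσ : constantCoeff σ = 0) (h : σ * φ = X)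
    (g : R⟦X⟧) (n : ℕ) : coeff n (subst σ g * φ ^ (n + 1) * d⁄dX R σ) = coeff n g := by
  have hpeel : subst σ g * φ ^ (n + 1) * d⁄dX R σ
      = X * (subst σ (mk fun i ↦ coeff (i + 1) g) * φ ^ n * d⁄dX R σ)
        + C (constantCoeff g) * (φ ^ (n + 1) * d⁄dX R σ) := by
    rw [subst_eq_mul_subst_shift_add_const hσ g, ← h]
    ring
  rw [hpeel, map_add, coeff_C_mul, coeff_pow_succ_mul_derivative hσ h]
  cases n with
  | zero => simp
  | succ n =>
    rw [coeff_succ_X_mul, coeff_subst_mul_pow_succ_mul_derivative hσ h, coeff_mk]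
    simp

end LagrangeInversion
end PowerSeriesGeneralities

section PrefixDominance

open Finset

/-- Every initial segment of `ℕ` contains at most as many elements of `b` as of `a`. If `a` and `b`
are the sets of positions of two letters in a word, this is the ballot condition on the word. -/
def PrefixDominates (a b : Finset ℕ) : Prop :=
  ∀ k, #{x ∈ b | x < k} ≤ #{x ∈ a | x < k}

variable {N : ℕ} {a b : Finset ℕ}

theorem card_filter_lt_of_subset_range (ha : a ⊆ range N) {k : ℕ} (hk : N ≤ k) :
    #{x ∈ a | x < k} = #a := by
  rw [filter_true_of_mem fun x hx ↦ (mem_range.mp (ha hx)).trans_le hk]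

theorem card_filter_lt_insert (ha : N ∉ a) (k : ℕ) :
    #{x ∈ insert N a | x < k} = #{x ∈ a | x < k} + if N < k then 1 else 0 := by
  rw [filter_insert]
  split_ifs with hk
  · rw [card_insert_of_notMem fun h ↦ ha (mem_of_mem_filter N h)]
  · rfl

theorem PrefixDominates.card_le (ha : a ⊆ range N) (hb : b ⊆ range N) (h : PrefixDominates a b) :
    #b ≤ #a := by
  simpa only [card_filter_lt_of_subset_range ha le_rfl, card_filter_lt_of_subset_range hb le_rfl]
    using h N

theorem prefixDominates_insert_insert (ha : N ∉ a) (hb : N ∉ b) :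
    PrefixDominates (insert N a) (insert N b) ↔ PrefixDominates a b := by
  simp only [PrefixDominates, card_filter_lt_insert ha, card_filter_lt_insert hb,
    add_le_add_iff_right]

theorem prefixDominates_insert_left (ha : a ⊆ range N) (hb : b ⊆ range N) :
    PrefixDominates (insert N a) b ↔ PrefixDominates a b := by
  simp only [PrefixDominates, card_filter_lt_insert fun h ↦ notMem_range_self (ha h)]
  refine ⟨fun h k ↦ ?_, fun h k ↦ le_add_right (h k)⟩
  rcases le_or_gt k N with hk | hk
  · simpa only [hk.not_gt, if_false, add_zero] using h k
  · have hN := h N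
    rw [if_neg (lt_irrefl N), add_zero, card_filter_lt_of_subset_range ha le_rfl,
      card_filter_lt_of_subset_range hb le_rfl] at hN
    rwa [card_filter_lt_of_subset_range ha hk.le, card_filter_lt_of_subset_range hb hk.le]

theorem prefixDominates_insert_right (ha : a ⊆ range N) (hb : b ⊆ range N) :
    PrefixDominates a (insert N b) ↔ PrefixDominates a b ∧ #b < #a := by
  simp only [PrefixDominates, card_filter_lt_insert fun h ↦ notMem_range_self (hb h)]
  refine ⟨fun h ↦ ⟨fun k ↦ le_of_add_le_left (h k), ?_⟩, fun ⟨h, hcard⟩ k ↦ ?_⟩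
  · have hN := h (N + 1)
    rwa [if_pos N.lt_succ_self, card_filter_lt_of_subset_range ha N.le_succ,
      card_filter_lt_of_subset_range hb N.le_succ] at hN
  · split_ifs with hk
    · rwa [card_filter_lt_of_subset_range ha hk.le, card_filter_lt_of_subset_range hb hk.le]
    · exact h k

open Classical in
/-- The subsets of `{0, …, N - 1}` dominated by `a`. -/
noncomputable def dominated (N : ℕ) (a : Finset ℕ) : Finset (Finset ℕ) :=
  {b ∈ (range N).powerset | PrefixDominates a b}

theorem mem_dominated : b ∈ dominated N a ↔ b ⊆ range N ∧ PrefixDominates a b := by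
  simp [dominated]

section Sums

variable {M : Type*} [AddCommMonoid M]

theorem sum_dominated_succ (ha : a ⊆ range N) (f : Finset ℕ → M) :
    ∑ b ∈ dominated (N + 1) a, f b
      = ∑ b ∈ dominated N a, (f b + if #b < #a then f (insert N b) else 0) := by
  simp only [dominated, sum_filter, range_add_one, sum_powerset_insert notMem_range_self,
    ← sum_add_distrib]
  refine sum_congr rfl fun b hb ↦ ?_
  rw [prefixDominates_insert_right ha (mem_powerset.mp hb)]
  split_ifs <;> simp_all

theorem sum_dominated_succ_insert (ha : a ⊆ range N) (f : Finset ℕ → M) :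
    ∑ b ∈ dominated (N + 1) (insert N a), f b = ∑ b ∈ dominated N a, (f b + f (insert N b)) := by
  simp only [dominated, sum_filter, range_add_one, sum_powerset_insert notMem_range_self,
    ← sum_add_distrib]
  refine sum_congr rfl fun b hb ↦ ?_
  have hb' := mem_powerset.mp hb
  rw [prefixDominates_insert_left ha hb', prefixDominates_insert_insert
    (fun h ↦ notMem_range_self (ha h)) fun h ↦ notMem_range_self (hb' h)]
  split_ifs <;> simp only [add_zero]

end Sums

section GeneratingFunctions

variable {R S : Type*} [CommRing R] [CommRing S]

/-- The generating polynomial of the sets dominated by `a`, with `y` marking the excess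
`#a - #b`; at `y = 0` it counts the dominated sets of the same cardinality as `a`. -/
noncomputable def excessPoly (N : ℕ) (a : Finset ℕ) (y : R) : R :=
  ∑ b ∈ dominated N a, y ^ (#a - #b)

theorem map_excessPoly (φ : R →+* S) (N : ℕ) (a : Finset ℕ) (y : R) :
    φ (excessPoly N a y) = excessPoly N a (φ y) := by
  simp only [excessPoly, map_sum, map_pow]

theorem excessPoly_zero (ha : a ⊆ range N) :
    excessPoly N a (0 : R) = #{b ∈ dominated N a | #b = #a} := by
  rw [excessPoly, natCast_card_filter]
  refine sum_congr rfl fun b hb ↦ ?_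
  have hle : #b ≤ #a := (mem_dominated.mp hb).2.card_le ha (mem_dominated.mp hb).1
  simp only [zero_pow_eq, tsub_eq_zero_iff_le, hle.ge_iff_eq, eq_comm]

theorem mul_excessPoly_succ (ha : a ⊆ range N) (y : R) :
    y * excessPoly (N + 1) a y = (1 + y) * excessPoly N a y - excessPoly N a 0 := by
  simp only [excessPoly, sum_dominated_succ ha, mul_sum, ← sum_sub_distrib]
  refine sum_congr rfl fun b hb ↦ ?_
  obtain ⟨hbN, hdom⟩ := mem_dominated.mp hb
  rw [card_insert_of_notMem fun h ↦ notMem_range_self (hbN h)]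
  rcases (hdom.card_le ha hbN).eq_or_lt with heq | hlt
  · simp [heq]
  · obtain ⟨i, hi⟩ := Nat.exists_eq_add_of_lt hlt
    rw [if_pos hlt, show #a - #b = i + 1 by lia, show #a - (#b + 1) = i by lia]
    ring

theorem excessPoly_succ_insert (ha : a ⊆ range N) (y : R) :
    excessPoly (N + 1) (insert N a) y = (1 + y) * excessPoly N a y := by
  simp only [excessPoly, sum_dominated_succ_insert ha, mul_sum]
  refine sum_congr rfl fun b hb ↦ ?_
  obtain ⟨hbN, hdom⟩ := mem_dominated.mp hb
  have hle := hdom.card_le ha hbN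
  rw [card_insert_of_notMem fun h ↦ notMem_range_self (ha h),
    card_insert_of_notMem fun h ↦ notMem_range_self (hbN h), Nat.succ_sub hle, Nat.succ_sub_succ,
    pow_succ]
  ring

/-- The generating polynomial of the triples `(a, b, c)` of subsets of `{0, …, N - 1}` such that
`a` dominates `b` and `c`; here `u`, `y` and `z` mark `#a`, `#a - #b` and `#a - #c`. -/
noncomputable def ballotPoly (N : ℕ) (u y z : R) : R :=
  ∑ a ∈ (range N).powerset, u ^ #a * (excessPoly N a y * excessPoly N a z)

theorem map_ballotPoly (φ : R →+* S) (N : ℕ) (u y z : R) :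
    φ (ballotPoly N u y z) = ballotPoly N (φ u) (φ y) (φ z) := by
  simp only [ballotPoly, map_sum, map_mul, map_pow, map_excessPoly]

theorem ballotPoly_comm (N : ℕ) (u y z : R) : ballotPoly N u y z = ballotPoly N u z y := by
  simp only [ballotPoly, mul_comm (excessPoly N _ y)]

theorem ballotPoly_zero (u y z : R) : ballotPoly 0 u y z = 1 := by
  have hdom : dominated 0 ∅ = {∅} := by
    ext b
    simp +contextual [mem_dominated, PrefixDominates]
  simp [ballotPoly, excessPoly, hdom]

theorem ballotPoly_succ (N : ℕ) (u y z : R) :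
    y * z * ballotPoly (N + 1) u y z
      = (1 + u * y * z) * (1 + y) * (1 + z) * ballotPoly N u y z
        - (1 + y) * ballotPoly N u y 0 - (1 + z) * ballotPoly N u z 0 + ballotPoly N u 0 0 := by
  rw [ballotPoly_comm N u z 0]
  simp only [ballotPoly, range_add_one, sum_powerset_insert notMem_range_self, ← sum_add_distrib,
    ← sum_sub_distrib, mul_sum]
  refine sum_congr rfl fun a ha ↦ ?_
  have ha' := mem_powerset.mp ha
  rw [card_insert_of_notMem fun h ↦ notMem_range_self (ha' h), excessPoly_succ_insert ha',
    excessPoly_succ_insert ha']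
  linear_combination u ^ #a * (z * excessPoly (N + 1) a z * mul_excessPoly_succ ha' y
    + ((1 + y) * excessPoly N a y - excessPoly N a 0) * mul_excessPoly_succ ha' z)

end GeneratingFunctions
end PrefixDominance

section KernelMethod

variable {R S : Type*} [CommRing R] [CommRing S]

/-- The generating series `∑ N, ballotPoly N u y z * X ^ N`. -/
noncomputable def ballotSeries (u y z : R) : R⟦X⟧ :=
  mk fun N ↦ ballotPoly N u y z

theorem map_ballotSeries (φ : R →+* S) (u y z : R) :
    map φ (ballotSeries u y z) = ballotSeries (φ u) (φ y) (φ z) := by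
  ext N
  simp only [ballotSeries, coeff_map, coeff_mk, map_ballotPoly]

theorem ballotSeries_functional_equation (u y z : R) :
    C (y * z) * ballotSeries u y z
        + X * (C (1 + y) * ballotSeries u y 0 + C (1 + z) * ballotSeries u z 0)
      = C (y * z)
        + X * (C ((1 + u * y * z) * (1 + y) * (1 + z)) * ballotSeries u y z
          + ballotSeries u 0 0) := by
  ext N
  cases N with
  | zero => simp [ballotSeries, ballotPoly_zero]
  | succ N =>
    simp only [map_add (coeff _), coeff_succ_X_mul, coeff_C_mul, coeff_succ_C, ballotSeries,
      coeff_mk]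
    linear_combination ballotPoly_succ N u y z

/-- The combination of boundary series which the kernel equation determines, doubled so as to
have coefficients in the base ring. -/
noncomputable def boundarySeries (u y : R) : R⟦X⟧ :=
  X * (C u * (2 * (C (1 + y) * ballotSeries u y 0) - ballotSeries u 0 0))

theorem map_boundarySeries (φ : R →+* S) (u y : R) :
    map φ (boundarySeries u y) = boundarySeries (φ u) (φ y) := by
  simp only [boundarySeries, map_mul, map_sub, map_X, map_C, map_ballotSeries, map_zero, map_ofNat,
    map_add, map_one]

theorem boundarySeries_add_boundarySeries {ε : R⟦X⟧ →+* R} (hε : ∀ r, ε (C r) = r) {u y z : R}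
    (hker : ε X * ((1 + u * y * z) * (1 + y) * (1 + z)) = y * z) :
    ε (boundarySeries u y) + ε (boundarySeries u z) = 2 * u * y * z := by
  have heq := congr(ε $(ballotSeries_functional_equation u y z))
  simp only [map_add, map_mul, hε, map_one] at heq
  simp only [boundarySeries, map_mul, map_sub, map_add, hε, map_ofNat, map_one]
  linear_combination 2 * u * heq + 2 * u * ε (ballotSeries u y z) * hker

theorem coeff_succ_boundarySeries_zero (u : R) (N : ℕ) :
    coeff (N + 1) (boundarySeries u 0) = u * ballotPoly N u 0 0 := by
  rw [boundarySeries, coeff_succ_X_mul, coeff_C_mul, add_zero, map_one, one_mul, two_mul,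
    add_sub_cancel_right, ballotSeries, coeff_mk]

end KernelMethod

section Invariants

variable {R : Type*} [CommRing R]

/-- A rational invariant of the kernel curve `t * (1 + u * y * z) * (1 + y) * (1 + z) = y * z`:
the quotient `rationalInvariant t u y / (y * (1 + y))` takes the same value at `z`. -/
def rationalInvariant (t u y : R) : R :=
  t * (1 + y) * (1 - y - u * y ^ 2) + y ^ 2

/-- The invariant of the kernel curve `t * (1 + u * y * z) * (1 + y) * (1 + z) = y * z` made from a
decoupling `f + g = 2 * u * y * z` of the product `y * z`: the quotient
`boundaryInvariant t u y f / (y * (1 + y))` is unchanged if `y`, `f` are replaced by `z`, `g`. -/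
def boundaryInvariant (t u y f : R) : R :=
  (2 + y * f) * (2 * y - t * (1 + y) * (2 + f + 2 * u * y))

theorem rationalInvariant_symm {t u y z : R}
    (hker : t * ((1 + u * y * z) * (1 + y) * (1 + z)) = y * z) :
    z * (1 + z) * rationalInvariant t u y = y * (1 + y) * rationalInvariant t u z := by
  rw [rationalInvariant, rationalInvariant]
  linear_combination (z - y) * hker

theorem boundaryInvariant_symm {t u y z f g : R}
    (hker : t * ((1 + u * y * z) * (1 + y) * (1 + z)) = y * z) (hfg : f + g = 2 * u * y * z) :
    z * (1 + z) * boundaryInvariant t u y f = y * (1 + y) * boundaryInvariant t u z g := by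
  obtain rfl := eq_sub_of_add_eq' hfg
  rw [boundaryInvariant, boundaryInvariant]
  linear_combination
    (-2) * ((1 + z) * (2 + y * f) - (1 + y) * (2 + z * (2 * u * y * z - f))) * hker

theorem rationalInvariant_mul {t u y ψ : R} (hψ : ψ = (1 + u * y ^ 2) * (1 + y) ^ 2)
    (ht : t * ψ = y ^ 2) :
    rationalInvariant t u y * ψ = y * (1 + y) * (y * (2 + u * y ^ 3)) := by
  rw [rationalInvariant]
  linear_combination (1 + y) * (1 - y - u * y ^ 2) * ht + y ^ 2 * hψ

theorem boundaryInvariant_mul {t u y ψ : R} (hψ : ψ = (1 + u * y ^ 2) * (1 + y) ^ 2)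
    (ht : t * ψ = y ^ 2) :
    boundaryInvariant t u y (u * y ^ 2) * ψ = y * (1 + y) * (2 + u * y ^ 3) ^ 2 := by
  rw [boundaryInvariant]
  linear_combination (2 + u * y ^ 3) * (2 * y * hψ - (1 + y) * (2 + u * y ^ 2 + 2 * u * y) * ht)

end Invariants

/-! The variables of `k⟦X⟧⟦X⟧⟦X⟧` are, from the inside out, `y`, `z` and `t`, and those of
`k⟦X⟧⟦X⟧` are `y` and `z` or `y` and `t`. The homomorphism `ε` substitutes for `t` the root
`t(y, z)` of the kernel, so for a series `E(y, t)` the elements `ε (map C E)` and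
`ε (map (map C) E)` are `E(y, t(y, z))` and `E(z, t(y, z))`. -/

section KernelCurve

variable {k : Type*} [CommRing k]

theorem C_X_dvd_iff {p : k⟦X⟧⟦X⟧} : C X ∣ p ↔ map constantCoeff p = 0 := by
  refine ⟨fun ⟨q, hq⟩ ↦ by simp [hq], fun h ↦ ?_⟩
  have hdvd (i : ℕ) : X ∣ coeff i p := X_dvd_iff.mpr <| by simpa using congr(coeff i $h)
  choose q hq using hdvd
  exact ⟨mk q, by ext1 i; rw [coeff_C_mul, coeff_mk, hq]⟩

theorem exists_eq_map_C_add_C_X_mul (p : k⟦X⟧⟦X⟧) :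
    ∃ q, p = map C (map constantCoeff p) + C X * q := by
  have hdvd : C X ∣ p - map C (map constantCoeff p) := by
    rw [C_X_dvd_iff, map_sub, sub_eq_zero]
    ext
    simp
  obtain ⟨q, hq⟩ := hdvd
  exact ⟨q, by rw [← hq, add_sub_cancel]⟩

theorem map_map_C_map_C (c : k⟦X⟧) : map (map C) (map C c) = map C (map (C (R := k)) c) := by
  ext1 i
  simp

theorem exists_kernel_root [Nontrivial k] (u : k) :
    ∃ ε : k⟦X⟧⟦X⟧⟦X⟧ →+* k⟦X⟧⟦X⟧, (∀ r, ε (C r) = r) ∧ X ∣ ε X ∧ ε X ≠ 0 ∧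
      ε X * ((1 + C (C u) * C X * X) * (1 + C X) * (1 + X)) = C X * X := by
  obtain ⟨v, hv⟩ : ∃ v : k⟦X⟧⟦X⟧, v * ((1 + C (C u) * C X * X) * (1 + C X) * (1 + X)) = 1 := by
    refine IsUnit.exists_left_inv ?_
    rw [isUnit_iff_constantCoeff, isUnit_iff_constantCoeff]
    simp
  obtain ⟨ε, hε, hεX⟩ := exists_eval_ringHom (t := (C X * X * v : k⟦X⟧⟦X⟧)) (by simp)
  have hker : ε X * ((1 + C (C u) * C X * X) * (1 + C X) * (1 + X)) = C X * X := by
    rw [hεX, mul_assoc, hv, mul_one]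
  refine ⟨ε, hε, hεX ▸ ⟨C X * v, by ring⟩, fun h ↦ ?_, hker⟩
  rw [h, zero_mul] at hker
  simpa [coeff_X] using congr(coeff 1 (coeff 1 $hker))

variable [IsDomain k]

theorem eq_zero_of_kernel_symm {ε : k⟦X⟧⟦X⟧⟦X⟧ →+* k⟦X⟧⟦X⟧} (hε : ∀ r, ε (C r) = r)
    (hX : X ∣ ε X) (hX0 : ε X ≠ 0) {E : k⟦X⟧⟦X⟧}
    (hE : (1 + X) * C X * ε (map C E) = (1 + C X) * X * ε (map (map C) E)) : E = 0 := by
  set e := E.divXPowOrder with he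
  have hsplit : X ^ E.order.toNat * e = E := X_pow_order_mul_divXPowOrder
  have hsymm : (1 + X) * C X * ε (map C e) = (1 + C X) * X * ε (map (map C) e) := by
    refine mul_left_cancel₀ (pow_ne_zero E.order.toNat hX0) ?_
    rw [← hsplit] at hE
    simp only [map_mul, map_pow, map_X] at hE
    linear_combination hE
  have hmap : constantCoeff (map C e) = C (constantCoeff e) := MvPowerSeries.constantCoeff_map C e
  have hzero : constantCoeff e = 0 := by
    simpa [constantCoeff_apply_of_X_dvd hX, hmap, hε, X_ne_zero] using congr(constantCoeff $hsymm)
  rwa [he, constantCoeff_divXPowOrder_eq_zero_iff] at hzero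

theorem exists_eq_map_C_mul_of_kernel_symm {ε : k⟦X⟧⟦X⟧⟦X⟧ →+* k⟦X⟧⟦X⟧}
    (hε : ∀ r, ε (C r) = r) (hX : X ∣ ε X) (hX0 : ε X ≠ 0) {P : k⟦X⟧⟦X⟧}
    (hP0 : map constantCoeff P = 0)
    (hP : X * (1 + X) * ε (map C P) = C X * (1 + C X) * ε (map (map C) P)) :
    ∃ c : k⟦X⟧, P = map C c * (C X * (1 + C X)) := by
  obtain ⟨q, rfl⟩ := C_X_dvd_iff.mpr hP0
  obtain ⟨E, hqE⟩ := exists_eq_map_C_add_C_X_mul q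
  set c := map constantCoeff q
  have hE : E - map C c = 0 := by
    refine eq_zero_of_kernel_symm hε hX hX0 ?_
    have hXC : (X * C X : k⟦X⟧⟦X⟧) ≠ 0 :=
      mul_ne_zero X_ne_zero ((map_ne_zero_iff _ C_injective).mpr X_ne_zero)
    refine mul_left_cancel₀ hXC ?_
    rw [hqE] at hP
    simp only [map_mul, map_add, map_sub, map_C, map_X, hε, map_map_C_map_C] at hP ⊢
    linear_combination hP
  refine ⟨c, ?_⟩
  rw [hqE, sub_eq_zero.mp hE]
  ring

theorem exists_boundaryInvariant_eq (u : k) : ∃ c : k⟦X⟧,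
    boundaryInvariant X (C (C u)) (C X) (boundarySeries (C u) X)
      = -2 * (2 + map C (boundarySeries u 0)) * rationalInvariant X (C (C u)) (C X)
        + map C c * (C X * (1 + C X)) := by
  obtain ⟨ε, hε, hX, hX0, hker⟩ := exists_kernel_root u
  suffices h : ∃ c : k⟦X⟧, boundaryInvariant X (C (C u)) (C X) (boundarySeries (C u) X)
      + 2 * (2 + map C (boundarySeries u 0)) * rationalInvariant X (C (C u)) (C X)
        = map C c * (C X * (1 + C X)) by
    obtain ⟨c, hc⟩ := h
    exact ⟨c, by linear_combination hc⟩
  refine exists_eq_map_C_mul_of_kernel_symm hε hX hX0 ?_ ?_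
  · have hd : map constantCoeff (boundarySeries (C u) X) = boundarySeries u 0 := by
      rw [map_boundarySeries, constantCoeff_C, constantCoeff_X]
    have hdd : map constantCoeff (map C (boundarySeries u 0)) = boundarySeries u 0 := by
      ext; simp
    simp only [boundaryInvariant, rationalInvariant, map_add, map_sub, map_mul, map_pow, map_X,
      map_C, constantCoeff_C, constantCoeff_X, hd, hdd, map_one, map_ofNat]
    simp only [map_zero]
    ring
  · have hrat := rationalInvariant_symm hker
    have hbdry := boundaryInvariant_symm hker (boundarySeries_add_boundarySeries hε hker)
    simp only [boundaryInvariant, rationalInvariant, map_add, map_sub, map_mul, map_pow, map_X,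
      map_C, map_boundarySeries, hε, map_one, map_ofNat] at hrat hbdry ⊢
    linear_combination hbdry + 2 * (2 + ε (boundarySeries (C (C u)) (C (C 0)))) * hrat

end KernelCurve

section Diagonal

variable {k : Type*} [CommRing k]

theorem map_C_eq_subst {ε : k⟦X⟧⟦X⟧ →+* k⟦X⟧} (hε : ∀ r, ε (C r) = r)
    (hX : constantCoeff (ε X) = 0) (g : k⟦X⟧) : ε (map C g) = subst (ε X) g := by
  have hsubst : HasSubst (ε X) := .of_constantCoeff_zero' hX
  have hext : ε.comp (map C) = (substAlgHom (R := k) hsubst : k⟦X⟧ →+* k⟦X⟧) := by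
    refine ringHom_ext_of_X_dvd ?_ (fun r ↦ ?_) ?_
    · simpa [X_dvd_iff] using hX
    · simp only [RingHom.comp_apply, map_C, hε, RingHom.coe_coe, coe_substAlgHom, subst_C]
      rfl
    · simp only [RingHom.comp_apply, map_X, RingHom.coe_coe, coe_substAlgHom, subst_X hsubst]
  simpa only [RingHom.comp_apply, RingHom.coe_coe, coe_substAlgHom] using congr($hext g)

variable [IsDomain k]

theorem exists_diagonal_eq (h2 : (2 : k) ≠ 0) (u : k) : ∃ τ c : k⟦X⟧,
    τ * ((1 + C u * X ^ 2) * (1 + X) ^ 2) = X ^ 2 ∧ constantCoeff τ = 0 ∧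
    (2 + C u * X ^ 3) ^ 2 = -2 * (2 + subst τ (boundarySeries u 0)) * (X * (2 + C u * X ^ 3))
      + subst τ c * ((1 + C u * X ^ 2) * (1 + X) ^ 2) := by
  obtain ⟨v, hv⟩ : ∃ v : k⟦X⟧, v * ((1 + C u * X ^ 2) * (1 + X) ^ 2) = 1 :=
    IsUnit.exists_left_inv <| by simp [isUnit_iff_constantCoeff]
  have hτ0 : constantCoeff (X ^ 2 * v) = 0 := by simp
  obtain ⟨ε, hε, hεX⟩ := exists_eval_ringHom hτ0
  set τ := X ^ 2 * v
  have hτ : τ * ((1 + C u * X ^ 2) * (1 + X) ^ 2) = X ^ 2 := by rw [mul_assoc, hv, mul_one]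
  have hdiag : ε (boundarySeries (C u) X) = C u * X ^ 2 := by
    have hadd := boundarySeries_add_boundarySeries hε (u := C u) (y := X) (z := X)
      (by rw [hεX]; linear_combination hτ)
    refine mul_left_cancel₀ (a := C 2) ((map_ne_zero_iff _ C_injective).mpr h2) ?_
    rw [map_ofNat]
    linear_combination hadd
  obtain ⟨c, hc⟩ := exists_boundaryInvariant_eq u
  refine ⟨τ, c, hτ, hτ0, ?_⟩
  have hinv : boundaryInvariant τ (C u) X (C u * X ^ 2)
      = -2 * (2 + subst τ (boundarySeries u 0)) * rationalInvariant τ (C u) X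
        + subst τ c * (X * (1 + X)) := by
    have hmap (g : k⟦X⟧) := map_C_eq_subst hε (hεX ▸ hτ0) g
    rw [hεX] at hmap
    simpa [boundaryInvariant, rationalInvariant, hε, hεX, hdiag, hmap, map_ofNat ε]
      using congr(ε $hc)
  have hcancel : (X * (1 + X) : k⟦X⟧) ≠ 0 :=
    mul_ne_zero X_ne_zero fun h ↦ one_ne_zero (α := k) <| by simpa using congr(constantCoeff $h)
  refine mul_left_cancel₀ hcancel ?_
  linear_combination ((1 + C u * X ^ 2) * (1 + X) ^ 2) * hinv - boundaryInvariant_mul rfl hτ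
    - 2 * (2 + subst τ (boundarySeries u 0)) * rationalInvariant_mul rfl hτ

theorem exists_sq_eq_mul_subst_sq (h2 : IsUnit (2 : k)) (u : k) : ∃ τ E : k⟦X⟧,
    τ * ((1 + C u * X ^ 2) * (1 + X) ^ 2) = X ^ 2 ∧ constantCoeff τ = 0 ∧ constantCoeff E = 2 ∧
    (2 + C u * X ^ 3 + (2 + subst τ (boundarySeries u 0)) * X) ^ 2
      = (1 + C u * X ^ 2) * (1 + X) ^ 2 * subst τ E ^ 2 := by
  obtain ⟨τ, c, hτ, hτ0, hc⟩ := exists_diagonal_eq h2.ne_zero u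
  have hsubst : HasSubst τ := .of_constantCoeff_zero' hτ0
  set d := boundarySeries u 0
  have hsquare : (2 + C u * X ^ 3 + (2 + subst τ d) * X) ^ 2
      = (1 + C u * X ^ 2) * (1 + X) ^ 2 * subst τ (c + (2 + d) ^ 2 * X) := by
    rw [subst_add hsubst, subst_mul hsubst, subst_pow hsubst, subst_add hsubst,
      subst_ofNat hsubst, subst_X hsubst]
    linear_combination hc - (2 + subst τ d) ^ 2 * hτ
  have hconst : constantCoeff (c + (2 + d) ^ 2 * X) = 2 ^ 2 := by
    simpa [constantCoeff_subst_of_constantCoeff_eq_zero hτ0, map_ofNat (constantCoeff (R := k))]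
      using congr(constantCoeff $hsquare).symm
  obtain ⟨E, hE0, hE⟩ := exists_sq_eq (h2.mul h2) hconst
  exact ⟨τ, E, hτ, hτ0, hE0, by rw [hsquare, ← hE, subst_pow hsubst]⟩

theorem exists_lagrange_parametrization (h2 : IsUnit (2 : k)) (u : k) : ∃ σ φ g : k⟦X⟧,
    constantCoeff σ = 0 ∧ σ * φ = X ∧ φ ^ 2 = (1 + C u * X ^ 2) * (1 + X) ^ 2 ∧
    subst σ g * φ = 2 + C u * X ^ 3 ∧
    ∀ N, coeff (2 * N + 3) g = -(u * ballotPoly N u 0 0) := by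
  obtain ⟨τ, E, hτ, hτ0, hE0, hE⟩ := exists_sq_eq_mul_subst_sq h2 u
  set ψ : k⟦X⟧ := (1 + C u * X ^ 2) * (1 + X) ^ 2 with hψ
  set d := boundarySeries u 0
  obtain ⟨w, hw⟩ : ∃ w, subst τ E * w = 1 := IsUnit.exists_right_inv <| by
    rwa [isUnit_iff_constantCoeff, constantCoeff_subst_of_constantCoeff_eq_zero hτ0, hE0]
  set φ := (2 + C u * X ^ 3 + (2 + subst τ d) * X) * w with hφ
  have hφ_sq : φ ^ 2 = ψ := by
    linear_combination w ^ 2 * hE + ψ * (subst τ E * w + 1) * hw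
  obtain ⟨φ', hφ'⟩ : ∃ φ', φ' * φ = 1 := IsUnit.exists_left_inv <| by
    rw [← isUnit_pow_iff two_ne_zero, hφ_sq]
    simp [hψ, isUnit_iff_constantCoeff]
  have hσ0 : constantCoeff (X * φ') = 0 := by simp
  have hσ : X * φ' * φ = X := by rw [mul_assoc, hφ', mul_one]
  have hσ_sq : (X * φ') ^ 2 = τ := by
    linear_combination - φ' ^ 2 * hτ - τ * φ' ^ 2 * hφ_sq + τ * (φ' * φ + 1) * hφ'
  refine ⟨X * φ', φ, expand 2 two_ne_zero E - X * expand 2 two_ne_zero (2 + d),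
    hσ0, hσ, hφ_sq, ?_, fun N ↦ ?_⟩
  · have hsubst : HasSubst (X * φ') := .of_constantCoeff_zero' hσ0
    have hτsubst : HasSubst τ := .of_constantCoeff_zero' hτ0
    rw [subst_sub hsubst, subst_mul hsubst, subst_X hsubst, subst_expand hsubst,
      subst_expand hsubst, hσ_sq, subst_add hτsubst, subst_ofNat hτsubst]
    linear_combination subst τ E * hφ + (2 + C u * X ^ 3 + (2 + subst τ d) * X) * hw
      - (2 + subst τ d) * hσ
  · rw [map_sub, coeff_succ_X_mul, coeff_expand_of_not_dvd _ _ _ (by lia),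
      show 2 * N + 2 = 2 * (N + 1) by ring, coeff_expand_mul, map_add,
      coeff_succ_boundarySeries_zero, ← map_ofNat (C (R := k)), coeff_succ_C]
    ring

end Diagonal

section CoefficientExtraction

theorem succ_mul_ballotPoly_zero {k : Type*} [CommRing k] [IsDomain k] [CharZero k]
    (h2 : IsUnit (2 : k)) (u : k) (N : ℕ) :
    (N + 1) * (u * ballotPoly N u 0 0)
      = coeff (2 * N + 3) (((1 + C u * X ^ 2) * (1 + X) ^ 2) ^ (N + 1))
        - u * coeff (2 * N) (((1 + C u * X ^ 2) * (1 + X) ^ 2) ^ (N + 1)) := by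
  obtain ⟨σ, φ, g, hσ0, hσ, hφ, hgφ, hg⟩ := exists_lagrange_parametrization h2 u
  have hcoeff : coeff (2 * N + 3) g = 2 * coeff (2 * N + 3) (φ ^ (2 * N + 3) * d⁄dX k σ)
      + u * coeff (2 * N) (φ ^ (2 * N + 3) * d⁄dX k σ) := calc
    coeff (2 * N + 3) g = coeff (2 * N + 3) (subst σ g * φ ^ (2 * N + 4) * d⁄dX k σ) :=
      (coeff_subst_mul_pow_succ_mul_derivative hσ0 hσ g _).symm
    _ = coeff (2 * N + 3) (C 2 * (φ ^ (2 * N + 3) * d⁄dX k σ)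
          + C u * (X ^ 3 * (φ ^ (2 * N + 3) * d⁄dX k σ))) := by
      rw [map_ofNat]
      congr 1
      linear_combination φ ^ (2 * N + 3) * d⁄dX k σ * hgφ
    _ = _ := by rw [map_add, coeff_C_mul, coeff_C_mul, coeff_X_pow_mul]
  have hpow : φ ^ (2 * N + 2) = ((1 + C u * X ^ 2) * (1 + X) ^ 2) ^ (N + 1) := by
    rw [← hφ, ← pow_mul, mul_add_one]
  have hlow := natCast_mul_coeff_pow_succ_mul_derivative hσ (2 * N + 2) (2 * N)
  have hhigh := natCast_mul_coeff_pow_succ_mul_derivative hσ (2 * N + 2) (2 * N + 3)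
  rw [hpow] at hlow hhigh
  rw [hg] at hcoeff
  push_cast at hlow hhigh
  refine h2.mul_left_cancel ?_
  linear_combination -2 * (N + 1) * hcoeff - 2 * hhigh - u * hlow

theorem coeff_one_add_X_pow {R : Type*} [CommSemiring R] (n i : ℕ) :
    coeff i ((1 + X : R⟦X⟧) ^ n) = n.choose i := by
  have hcoe : ((1 + X) ^ n : R⟦X⟧) = ((1 + .X) ^ n : Polynomial R) := by simp
  rw [hcoe, Polynomial.coeff_coe, Polynomial.coeff_one_add_X_pow]

theorem coeff_coeff_kernel_pow {R : Type*} [CommRing R] (M i j : ℕ) :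
    (coeff (2 * j + i) (((1 + C (.X : Polynomial R) * X ^ 2) * (1 + X) ^ 2) ^ M)).coeff j
      = (M.choose j * (2 * M).choose i : R) := by
  have hexpand : ((1 + C (.X : Polynomial R) * X ^ 2) * (1 + X) ^ 2) ^ M
      = ∑ l ∈ Finset.range (M + 1),
          C (Polynomial.monomial l (M.choose l : R)) * (X ^ (2 * l) * (1 + X) ^ (2 * M)) := by
    rw [mul_pow, ← pow_mul, add_comm 1 (C _ * _), add_pow, Finset.sum_mul]
    refine Finset.sum_congr rfl fun l _ ↦ ?_
    rw [← Polynomial.C_mul_X_pow_eq_monomial]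
    simp only [map_mul, map_pow, map_natCast]
    ring
  have hterm (l : ℕ) :
      (coeff (2 * j + i) (C (Polynomial.monomial l (M.choose l : R))
          * (X ^ (2 * l) * (1 + X) ^ (2 * M)))).coeff j
        = if l = j then (M.choose j * (2 * M).choose i : R) else 0 := by
    rw [coeff_C_mul, coeff_X_pow_mul', coeff_one_add_X_pow]
    split_ifs with hle hl hl
    · subst hl
      simp
    · rw [← Polynomial.C_eq_natCast, Polynomial.monomial_mul_C,
        Polynomial.coeff_monomial_of_ne _ (Ne.symm hl)]
    · lia
    · simp
  rw [hexpand, map_sum, Polynomial.finsetSum_coeff]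
  simp only [hterm, Finset.sum_ite_eq', Finset.mem_range]
  split_ifs with hj
  · rfl
  · rw [Nat.choose_eq_zero_of_lt (by lia), Nat.cast_zero, zero_mul]

open Finset in
theorem coeff_ballotPoly_zero {R : Type*} [CommRing R] (N n : ℕ) :
    (ballotPoly N (.X : Polynomial R) 0 0).coeff n
      = ((∑ a ∈ powersetCard n (range N), #{b ∈ dominated N a | #b = #a} ^ 2 : ℕ) : R) := by
  rw [ballotPoly, Polynomial.finsetSum_coeff, powersetCard_eq_filter, sum_filter,
    Nat.cast_sum]
  refine sum_congr rfl fun a ha ↦ ?_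
  rw [excessPoly_zero (mem_powerset.mp ha), ← pow_two, ← Nat.cast_pow, Polynomial.X_pow_mul,
    ← Polynomial.C_eq_natCast, Polynomial.coeff_C_mul_X_pow]
  simp only [eq_comm (a := n)]
  split_ifs <;> simp

open Finset in
theorem succ_mul_sum_sq_card_dominated (n m : ℕ) :
    ((n + m + 1) * (∑ a ∈ powersetCard n (range (n + m)),
        #{b ∈ dominated (n + m) a | #b = #a} ^ 2 : ℕ) : ℚ)
      = (n + m + 1).choose (n + 1) * (2 * (n + m + 1)).choose (2 * m + 1)
        - (n + m + 1).choose n * (2 * (n + m + 1)).choose (2 * m) := by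
  have h2 : IsUnit (2 : Polynomial ℚ) := by
    simpa only [map_ofNat] using (IsUnit.mk0 (2 : ℚ) two_ne_zero).map Polynomial.C
  have h := congr(Polynomial.coeff $(succ_mul_ballotPoly_zero h2 .X (n + m)) (n + 1))
  rw [Polynomial.coeff_sub, Polynomial.coeff_X_mul,
    show 2 * (n + m) + 3 = 2 * (n + 1) + (2 * m + 1) by ring, mul_add 2 n m,
    coeff_coeff_kernel_pow, coeff_coeff_kernel_pow] at h
  rw [← h, ← coeff_ballotPoly_zero, ← Nat.cast_add_one, ← Polynomial.C_eq_natCast,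
    Polynomial.coeff_C_mul, Polynomial.coeff_X_mul]
  norm_cast

open Finset in
open scoped Nat in
theorem sum_sq_card_dominated_mul_factorial (n m : ℕ) :
    (∑ a ∈ powersetCard n (range (n + m)), #{b ∈ dominated (n + m) a | #b = #a} ^ 2)
        * ((n + 1)! * (2 * n + 1)!) * ((m + 1)! * (2 * m + 1)!)
      = (n + m + 1)! * (2 * (n + m) + 1)! := by
  have hsum := succ_mul_sum_sq_card_dominated n m
  set W := ∑ a ∈ powersetCard n (range (n + m)), #{b ∈ dominated (n + m) a | #b = #a} ^ 2
  have hchoose {i j l : ℕ} (h : i + j = l) : (l.choose j * (i ! * j !) : ℚ) = l ! := by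
    subst h
    exact_mod_cast (mul_assoc _ _ _).symm.trans (Nat.add_choose_mul_factorial_mul_factorial i j)
  have h₁ := hchoose (show m + (n + 1) = n + m + 1 by ring)
  have h₂ := hchoose (show m + 1 + n = n + m + 1 by ring)
  have h₃ := hchoose (show 2 * n + 1 + (2 * m + 1) = 2 * (n + m) + 1 + 1 by ring)
  have h₄ := hchoose (show 2 * n + 1 + 1 + 2 * m = 2 * (n + m) + 1 + 1 by ring)
  rw [show 2 * (n + m + 1) = 2 * (n + m) + 1 + 1 by ring] at hsum
  suffices (W * ((n + 1)! * (2 * n + 1)!) * ((m + 1)! * (2 * m + 1)!) : ℚ)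
      = (n + m + 1)! * (2 * (n + m) + 1)! by exact_mod_cast this
  have hpos : (2 * (n + m + 1) : ℚ) ≠ 0 := by positivity
  refine mul_left_cancel₀ hpos ?_
  simp only [Nat.factorial_succ n, Nat.factorial_succ m, Nat.factorial_succ (2 * m),
    Nat.factorial_succ (2 * n + 1), Nat.factorial_succ (2 * (n + m) + 1)] at h₁ h₂ h₃ h₄ ⊢
  push_cast at h₁ h₂ h₃ h₄ ⊢
  linear_combination
    2 * ((n + 1) * n ! * (2 * n + 1)! * ((m + 1) * m ! * ((2 * m + 1) * (2 * m)!))) * hsum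
    + 2 * (m + 1) * ((2 * (n + m) + 1 + 1).choose (2 * m + 1)
      * ((2 * n + 1)! * ((2 * m + 1) * (2 * m)!)) * h₁ + (n + m + 1)! * h₃)
    - (2 * m + 1) * ((2 * (n + m) + 1 + 1).choose (2 * m)
      * ((2 * (n + 1)) * (2 * n + 1)! * (2 * m)!) * h₂ + (n + m + 1)! * h₄)

end CoefficientExtraction

section Staircase

open Finset

theorem prefixDominates_image_iff {n : ℕ} {F G : Fin n → ℕ} (hF : StrictMono F)
    (hG : StrictMono G) : PrefixDominates (univ.image F) (univ.image G) ↔ F ≤ G := by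
  have hcount {H : Fin n → ℕ} (hH : StrictMono H) (k : ℕ) :
      #{x ∈ univ.image H | x < k} = #{i | H i < k} := by
    rw [filter_image, card_image_of_injective _ hH.injective]
  simp only [PrefixDominates, hcount hF, hcount hG]
  refine ⟨fun h i ↦ ?_, fun h k ↦ card_le_card fun i ↦ ?_⟩
  · refine Nat.lt_succ_iff.mp ((Tuple.lt_card_lt_iff_apply_lt_of_monotone hF.monotone).mp ?_)
    exact ((Tuple.lt_card_lt_iff_apply_lt_of_monotone hG.monotone).mpr (G i).lt_succ_self).trans_le
      (h _)
  · simpa using (h i).trans_lt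

theorem add_sub_le_of_strictMono {n : ℕ} {F : Fin n → ℕ} (hF : StrictMono F) {i j : Fin n}
    (hij : i ≤ j) : F i + (j - i : ℕ) ≤ F j := by
  have hcard : #(Ico i j) ≤ #(Ico (F i) (F j)) := by
    refine card_le_card_of_injOn F (fun x hx ↦ ?_) hF.injective.injOn
    rw [coe_Ico] at hx ⊢
    exact ⟨hF.monotone hx.1, hF hx.2⟩
  rw [Fin.card_Ico, Nat.card_Ico] at hcard
  have := hF.monotone hij
  lia

variable {n m : ℕ}

/-- The set `{f 0, f 1 + 1, …, f (n - 1) + (n - 1)}`. This is the standard encoding of weakly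
increasing sequences of length `n` in `{0, …, m}` by `n`-element subsets of
`{0, …, n + m - 1}`. -/
def staircase (f : Fin n →o Fin (m + 1)) : Finset ℕ :=
  univ.image fun i ↦ (f i : ℕ) + i

theorem strictMono_add_val (f : Fin n →o Fin (m + 1)) : StrictMono fun i ↦ (f i : ℕ) + i :=
  (Fin.val_strictMono.monotone.comp f.monotone).add_strictMono Fin.val_strictMono

theorem prefixDominates_staircase_iff {f g : Fin n →o Fin (m + 1)} :
    PrefixDominates (staircase f) (staircase g) ↔ f ≤ g := by
  rw [staircase, staircase, prefixDominates_image_iff (strictMono_add_val f) (strictMono_add_val g)]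
  simp only [Pi.le_def, add_le_add_iff_right, Fin.val_fin_le, ← OrderHom.coe_le_coe]

theorem staircase_injective : Function.Injective (staircase (n := n) (m := m)) := fun f g h ↦
  le_antisymm (prefixDominates_staircase_iff.mp fun _ ↦ by rw [h])
    (prefixDominates_staircase_iff.mp fun _ ↦ by rw [h])

theorem staircase_mem (f : Fin n →o Fin (m + 1)) :
    staircase f ∈ powersetCard n (range (n + m)) := by
  refine mem_powersetCard.mpr ⟨fun x hx ↦ ?_, ?_⟩
  · obtain ⟨i, -, rfl⟩ := mem_image.mp hx
    exact mem_range.mpr (by lia)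
  · rw [staircase, card_image_of_injective _ (strictMono_add_val f).injective, card_fin]

theorem exists_staircase_eq {s : Finset ℕ} (hs : s ∈ powersetCard n (range (n + m))) :
    ∃ f : Fin n →o Fin (m + 1), staircase f = s := by
  obtain ⟨hsub, hcard⟩ := mem_powersetCard.mp hs
  set e := s.orderEmbOfFin hcard
  have hgap {i j : Fin n} (hij : i ≤ j) : e i + (j - i : ℕ) ≤ e j :=
    add_sub_le_of_strictMono e.strictMono hij
  have hlow (i : Fin n) : i ≤ e i := by
    have := hgap (i := ⟨0, i.pos⟩) (Nat.zero_le i)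
    lia
  have hhigh (i : Fin n) : e i < m + 1 + i := by
    have := hgap (j := ⟨n - 1, Nat.sub_one_lt_of_lt i.isLt⟩) (Nat.le_sub_one_of_lt i.isLt)
    have := mem_range.mp (hsub (s.orderEmbOfFin_mem hcard ⟨n - 1, Nat.sub_one_lt_of_lt i.isLt⟩))
    lia
  have hmono (i j : Fin n) (hij : i ≤ j) : e i - i ≤ e j - j := by
    have := hgap hij
    lia
  refine ⟨⟨fun i ↦ ⟨e i - i, Nat.sub_lt_right_of_lt_add (hlow i) (hhigh i)⟩, hmono⟩, ?_⟩
  calc staircase _ = univ.image e := image_congr fun i _ ↦ Nat.sub_add_cancel (hlow i)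
    _ = s := image_orderEmbOfFin_univ s hcard

theorem image_staircase [Fintype (Fin n →o Fin (m + 1))] :
    univ.image (staircase (n := n) (m := m)) = powersetCard n (range (n + m)) := by
  ext s
  refine ⟨fun h ↦ ?_, fun h ↦ ?_⟩
  · obtain ⟨f, -, rfl⟩ := mem_image.mp h
    exact staircase_mem f
  · obtain ⟨f, rfl⟩ := exists_staircase_eq h
    exact mem_image_of_mem _ (mem_univ f)

theorem card_Ici_eq_card_dominated (f : Fin n →o Fin (m + 1)) :
    Nat.card (Set.Ici f) = #{b ∈ dominated (n + m) (staircase f) | #b = #(staircase f)} := by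
  rw [Nat.card_coe_set_eq, ← Set.ncard_image_of_injective _ staircase_injective,
    ← Set.ncard_coe_finset]
  congr 1
  ext b
  have hf := (mem_powersetCard.mp (staircase_mem f)).2
  simp only [Set.mem_image, Set.mem_Ici, coe_filter, Set.mem_ofPred_eq, mem_dominated, hf]
  constructor
  · rintro ⟨g, hg, rfl⟩
    obtain ⟨hsub, hcard⟩ := mem_powersetCard.mp (staircase_mem g)
    exact ⟨⟨hsub, prefixDominates_staircase_iff.mpr hg⟩, hcard⟩
  · rintro ⟨⟨hsub, hdom⟩, hcard⟩
    obtain ⟨g, rfl⟩ := exists_staircase_eq (mem_powersetCard.mpr ⟨hsub, hcard⟩)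
    exact ⟨g, prefixDominates_staircase_iff.mp hdom, rfl⟩

end Staircase

section OrderPolynomial

/-- A monotone map on `V × ι` is a monotone map on the bottom copy of `ι` together with two
monotone maps above it. -/
noncomputable def monotoneEquivSigmaIci {ι α : Type*} [Preorder ι] [Preorder α] :
    {π : VP × ι → α // Monotone π} ≃ Σ f : ι →o α, Set.Ici f × Set.Ici f where
  toFun π :=
    let row (v : VP) : ι →o α := ⟨fun i ↦ π.1 (v, i), fun _ _ hij ↦ π.2 ⟨le_rfl, hij⟩⟩
    ⟨row .a, ⟨row .b, fun _ ↦ π.2 ⟨.inr rfl, le_rfl⟩⟩, ⟨row .c, fun _ ↦ π.2 ⟨.inr rfl, le_rfl⟩⟩⟩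
  invFun t := by
    refine ⟨fun p ↦ VP.rec t.1 t.2.1.1 t.2.2.1 p.1 p.2, ?_⟩
    rintro ⟨v, i⟩ ⟨w, j⟩ ⟨rfl | rfl, hij⟩
    · cases v
      exacts [t.1.monotone hij, t.2.1.1.monotone hij, t.2.2.1.monotone hij]
    · cases w
      exacts [t.1.monotone hij, (t.1.monotone hij).trans (t.2.1.2 j),
        (t.1.monotone hij).trans (t.2.2.2 j)]
  left_inv := by
    rintro ⟨π, hπ⟩
    ext ⟨v, i⟩
    cases v <;> rfl
  right_inv _ := rfl

open Finset in
theorem card_monotone_eq_sum (n m : ℕ) :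
    Nat.card {π : VP × Fin n → Fin (m + 1) // Monotone π}
      = ∑ a ∈ powersetCard n (range (n + m)), #{b ∈ dominated (n + m) a | #b = #a} ^ 2 := by
  have : Fintype (Fin n →o Fin (m + 1)) := @Fintype.ofFinite _ (DFunLike.finite _)
  rw [Nat.card_congr monotoneEquivSigmaIci, Nat.card_sigma, ← image_staircase,
    sum_image staircase_injective.injOn]
  simp only [Nat.card_prod, card_Ici_eq_card_dominated, pow_two]

theorem prod_Icc_add_mul_factorial (a n : ℕ) :
    (∏ i ∈ Finset.Icc 1 n, (a + i)) * a.factorial = (a + n).factorial := by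
  induction n with
  | zero => simp
  | succ n ih =>
    rw [Finset.prod_Icc_succ_top (by lia), ← add_assoc, Nat.factorial_succ, ← ih]
    ring

end OrderPolynomial

/-- The Kreweras–Niederhausen order polynomial product formula: the number of weakly
order-preserving maps `V(n) → {0, 1, …, m}` equals
`(∏_{i=1}^{n} (m+1+i) * ∏_{i=1}^{2n} (2m+i+1)) / ((n+1)! * (2n+1)!)`,
stated multiplicatively. -/
theorem order_polynomial_Vn (n m : ℕ) (hn : 1 ≤ n) :
    Nat.card {π : VP × Fin n → Fin (m + 1) // Monotone π} *
        ((n + 1).factorial * (2 * n + 1).factorial)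
      = (∏ i ∈ Finset.Icc 1 n, (m + 1 + i)) *
        (∏ i ∈ Finset.Icc 1 (2 * n), (2 * m + i + 1)) := by
  refine Nat.eq_of_mul_eq_mul_right (Nat.mul_pos (m + 1).factorial_pos (2 * m + 1).factorial_pos) ?_
  calc
    _ = (n + m + 1).factorial * (2 * (n + m) + 1).factorial := by
      rw [card_monotone_eq_sum, sum_sq_card_dominated_mul_factorial]
    _ = (m + 1 + n).factorial * (2 * m + 1 + 2 * n).factorial := by
      congr 2 <;> ring
    _ = _ := by
      rw [← prod_Icc_add_mul_factorial (m + 1), ← prod_Icc_add_mul_factorial (2 * m + 1),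
        mul_mul_mul_comm]
      simp only [add_right_comm (2 * m) 1]
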